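/- Fix n ≥ 2, t ∈ ℝ, and a function d ↦ r₀(d) > 0 with lim_{d→∞} (r₀(d)² − d/12)/√d = t. Let H_d denote the Shannon entropy (base 2) of the hard random geometric graph ensemble on n i.i.d. uniform points in the d-dimensional torus 𝕋^d with connection radius r₀(d). Then lim_{d→∞} H_d = (n(n−1)/2)·h₂(p̄(t)), where p̄(t) = P(W ≤ t) for W a centered Gaussian of variance 1/180 and h₂(p) = −p log₂ p − (1−p) log₂(1−p). Moreover, as a function of t this limit is maximised exactly at t = 0, where p̄(0) = 1/2 and the limit equals n(n−1)/2. -/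

import Mathlib

open MeasureTheory ProbabilityTheory Filter Topology

/-- The uniform probability measure on `[0,1]`. -/
noncomputable def unif01 : Measure ℝ := volume.restrict (Set.Icc (0:ℝ) 1)

/-- The law of `n` i.i.d. uniform random points in `[0,1]^d`. -/
noncomputable def cubeLaw (n d : ℕ) : Measure (Fin n → Fin d → ℝ) :=
  Measure.pi fun _ => Measure.pi fun _ => unif01

/-- The distance on the `d`-dimensional unit torus. -/
noncomputable def torusDist (d : ℕ) (x y : Fin d → ℝ) : ℝ :=
  Real.sqrt (∑ k : Fin d, (min |x k - y k| (1 - |x k - y k|)) ^ 2)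

/-- `p̄(t) = P(W ≤ t)` for `W` a centered Gaussian of variance `1/180`. -/
noncomputable def pbar (t : ℝ) : ℝ :=
  (gaussianReal 0 (1/180 : NNReal) (Set.Iic t)).toReal

/-- The binary entropy function (base-2 logarithm). -/
noncomputable def binEnt (p : ℝ) : ℝ := -p * Real.logb 2 p - (1 - p) * Real.logb 2 (1 - p)

/-- The probability that the hard torus RGG equals the labelled graph `g`. -/
noncomputable def rggProb (n d : ℕ) (r : ℝ) (g : SimpleGraph (Fin n)) : ℝ :=
  (cubeLaw n d {ω | ∀ i j : Fin n, i < j →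
    (torusDist d (ω i) (ω j) ≤ r ↔ g.Adj i j)}).toReal

/-- The Shannon entropy (base 2) of the hard torus RGG ensemble in dimension `d`. -/
noncomputable def rggEntropy (n d : ℕ) (r : ℝ) : ℝ :=
  -∑ g : SimpleGraph (Fin n), rggProb n d r g * Real.logb 2 (rggProb n d r g)

noncomputable def perSq (u : ℝ) : ℝ := (u - round u) ^ 2

noncomputable def cPer (u : ℝ) : ℝ := perSq u - 1 / 12

instance instProbUnif01 : IsProbabilityMeasure unif01 := ⟨by simp [unif01]⟩

lemma perSq_eq_fract (u : ℝ) : perSq u = (min (Int.fract u) (1 - Int.fract u)) ^ 2 := by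
  rw [perSq, ← abs_sub_round_eq_min, sq_abs]

lemma perSq_neg (u : ℝ) : perSq (-u) = perSq u := by
  rw [perSq_eq_fract, perSq_eq_fract]
  by_cases h : Int.fract u = 0
  · rw [h, Int.fract_neg_eq_zero.2 h]
  · rw [Int.fract_neg h, sub_sub_cancel, min_comm]

lemma perSq_periodic : Function.Periodic perSq 1 := by
  intro u
  rw [perSq_eq_fract, perSq_eq_fract, Int.fract_add_one]

lemma perSq_of_mem {u : ℝ} (h0 : 0 ≤ u) (h1 : u ≤ 1) : perSq u = (min u (1 - u)) ^ 2 := by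
  rw [perSq_eq_fract]
  rcases h1.eq_or_lt with h | h
  · subst h; simp
  · rw [Int.fract_eq_self.2 ⟨h0, h⟩]

lemma perSq_eq_torus {x y : ℝ} (hx : x ∈ Set.Icc (0:ℝ) 1) (hy : y ∈ Set.Icc (0:ℝ) 1) :
    (min |x - y| (1 - |x - y|)) ^ 2 = perSq (x - y) := by
  have h : perSq (x - y) = perSq |x - y| := by
    rcases abs_choice (x - y) with h | h
    · rw [h]
    · rw [h, perSq_neg]
  rw [h, perSq_of_mem (abs_nonneg _)]
  rw [abs_le]
  constructor <;> linarith [hx.1, hx.2, hy.1, hy.2]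

lemma measurable_perSq : Measurable perSq := by
  have : perSq = fun u => (min (Int.fract u) (1 - Int.fract u)) ^ 2 := by
    funext u; exact perSq_eq_fract u
  rw [this]
  fun_prop

lemma measurable_cPer : Measurable cPer := measurable_perSq.sub_const _

lemma abs_cPer_le (u : ℝ) : |cPer u| ≤ 1 := by
  have h1 := abs_sub_round u
  have h2 : perSq u ≤ 1 / 4 := by
    rw [perSq, ← sq_abs]
    nlinarith [abs_nonneg (u - round u)]
  have h3 : 0 ≤ perSq u := sq_nonneg _
  rw [cPer, abs_le]
  constructor <;> linarith

lemma integral_unif01 (f : ℝ → ℝ) : ∫ x, f x ∂unif01 = ∫ x in (0:ℝ)..1, f x := by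
  rw [unif01, intervalIntegral.integral_of_le zero_le_one, integral_Icc_eq_integral_Ioc]

lemma integral_shift (F : ℝ → ℝ) (y : ℝ) :
    ∫ x, F (perSq (x - y)) ∂unif01 = ∫ x in (0:ℝ)..1, F (perSq x) := by
  rw [integral_unif01, intervalIntegral.integral_comp_sub_right (fun x => F (perSq x))]
  have hp : Function.Periodic (fun x => F (perSq x)) 1 := fun x => by
    simp only [perSq_periodic x]
  have := hp.intervalIntegral_add_eq (0 - y) 0
  rw [zero_add] at this
  rw [← this]
  congr 1
  ring

lemma integral_split (F : ℝ → ℝ) (hF : Continuous F) :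
    ∫ x in (0:ℝ)..1, F (perSq x) =
      (∫ x in (0:ℝ)..(1/2), F (x ^ 2)) + ∫ x in (1/2:ℝ)..1, F ((1 - x) ^ 2) := by
  have h1 : Set.EqOn (fun x => F (x ^ 2)) (fun x => F (perSq x)) (Set.uIcc (0:ℝ) (1/2)) := by
    intro x hx
    rw [Set.uIcc_of_le (by norm_num)] at hx
    simp only
    rw [perSq_of_mem hx.1 (by linarith [hx.2]), min_eq_left (by linarith [hx.2])]
  have h2 : Set.EqOn (fun x => F ((1 - x) ^ 2)) (fun x => F (perSq x)) (Set.uIcc (1/2:ℝ) 1) := by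
    intro x hx
    rw [Set.uIcc_of_le (by norm_num)] at hx
    simp only
    rw [perSq_of_mem (by linarith [hx.1]) hx.2, min_eq_right (by linarith [hx.1])]
  have i1 : IntervalIntegrable (fun x => F (perSq x)) volume 0 (1/2) :=
    (ContinuousOn.congr (f := fun x => F (x ^ 2)) (by fun_prop)
      (fun x hx => (h1 hx).symm)).intervalIntegrable
  have i2 : IntervalIntegrable (fun x => F (perSq x)) volume (1/2) 1 :=
    (ContinuousOn.congr (f := fun x => F ((1 - x) ^ 2)) (by fun_prop)
      (fun x hx => (h2 hx).symm)).intervalIntegrable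
  rw [← intervalIntegral.integral_add_adjacent_intervals i1 i2,
    intervalIntegral.integral_congr h1, intervalIntegral.integral_congr h2]

lemma integral_cPer (y : ℝ) : ∫ x, cPer (x - y) ∂unif01 = 0 := by
  have := integral_shift (fun u => u - 1 / 12) y
  simp only [cPer]
  rw [this, integral_split (fun u => u - 1 / 12) (by fun_prop)]
  have e : ∫ x in (1/2:ℝ)..1, ((1 - x) ^ 2 - 1 / 12) = ∫ x in (0:ℝ)..(1/2), (x ^ 2 - 1 / 12) := by
    rw [intervalIntegral.integral_comp_sub_left (fun x : ℝ => x ^ 2 - 1 / 12)]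
    norm_num
  rw [e, intervalIntegral.integral_sub (by simp) (by simp)]
  simp [integral_pow]
  norm_num

lemma integral_cPer' (y : ℝ) : ∫ x, cPer (y - x) ∂unif01 = 0 := by
  rw [← integral_cPer y]
  congr 1
  funext x
  rw [cPer, cPer, ← perSq_neg, neg_sub]

lemma integral_cPer_sq (y : ℝ) : ∫ x, cPer (x - y) ^ 2 ∂unif01 = 1 / 180 := by
  have := integral_shift (fun u => (u - 1 / 12) ^ 2) y
  simp only [cPer]
  rw [this, integral_split (fun u => (u - 1 / 12) ^ 2) (by fun_prop)]
  have e : ∫ x in (1/2:ℝ)..1, ((1 - x) ^ 2 - 1 / 12) ^ 2 =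
      ∫ x in (0:ℝ)..(1/2), (x ^ 2 - 1 / 12) ^ 2 := by
    rw [intervalIntegral.integral_comp_sub_left (fun x : ℝ => (x ^ 2 - 1 / 12) ^ 2)]
    norm_num
  have e2 : (fun x : ℝ => (x ^ 2 - 1 / 12) ^ 2) = fun x => x ^ 4 - (1 / 6) * x ^ 2 + 1 / 144 := by
    funext x; ring
  rw [e, e2, intervalIntegral.integral_add (by apply Continuous.intervalIntegrable; fun_prop)
    (by simp), intervalIntegral.integral_sub (by simp)
    (by apply Continuous.intervalIntegrable; fun_prop), intervalIntegral.integral_const_mul]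
  simp [integral_pow]
  norm_num

/-- product measure on one coordinate of all points -/
noncomputable def muN (n : ℕ) : Measure (Fin n → ℝ) := Measure.pi fun _ => unif01

instance instProbMuN (n : ℕ) : IsProbabilityMeasure (muN n) := by
  unfold muN; infer_instance

lemma mp_update (n : ℕ) (a : Fin n) :
    MeasurePreserving (fun p : (Fin n → ℝ) × ℝ => Function.update p.1 a p.2)
      ((muN n).prod unif01) (muN n) := by
  have hm : Measurable (fun p : (Fin n → ℝ) × ℝ => Function.update p.1 a p.2) := by
    rw [measurable_pi_iff]
    intro i
    by_cases h : i = a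
    · subst h; simpa using measurable_snd
    · simp only [Function.update_of_ne h]; fun_prop
  refine ⟨hm, ?_⟩
  symm
  refine Measure.pi_eq fun s hs => ?_
  rw [Measure.map_apply hm (MeasurableSet.univ_pi hs)]
  have : (fun p : (Fin n → ℝ) × ℝ => Function.update p.1 a p.2) ⁻¹' (Set.univ.pi s) =
      (Set.univ.pi (Function.update s a Set.univ)) ×ˢ s a := by
    ext p
    simp only [Set.mem_preimage, Set.mem_pi, Set.mem_univ, forall_true_left, Set.mem_prod]
    constructor
    · intro h
      refine ⟨fun i => ?_, by simpa using h a⟩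
      by_cases hi : i = a
      · subst hi; simp
      · simpa [Function.update_of_ne hi] using h i
    · rintro ⟨h1, h2⟩ i
      by_cases hi : i = a
      · subst hi; simpa using h2
      · simpa [Function.update_of_ne hi] using h1 i
  rw [this, Measure.prod_prod, muN, Measure.pi_pi, ← Finset.mul_prod_erase _ _ (Finset.mem_univ a),
    ← Finset.mul_prod_erase _ (fun i => unif01 (s i)) (Finset.mem_univ a), mul_comm]
  simp only [Function.update_self, measure_univ, one_mul]
  congr 1
  refine Finset.prod_congr rfl fun i hi => ?_
  rw [Function.update_of_ne (Finset.ne_of_mem_erase hi)]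

lemma integral_update (n : ℕ) (a : Fin n) (f : (Fin n → ℝ) → ℝ) (hf : Integrable f (muN n)) :
    ∫ x, f x ∂(muN n) = ∫ x, ∫ u, f (Function.update x a u) ∂unif01 ∂(muN n) := by
  have h := mp_update n a
  have hf' : Integrable f (Measure.map (fun p : (Fin n → ℝ) × ℝ => Function.update p.1 a p.2)
      ((muN n).prod unif01)) := by rwa [h.map_eq]
  have h1 := integral_map h.measurable.aemeasurable hf'.aestronglyMeasurable
  rw [h.map_eq] at h1
  rw [h1]
  exact integral_prod _ (hf'.comp_measurable h.measurable)

abbrev EdgeT (n : ℕ) := {e : Fin n × Fin n // e.1 < e.2}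

noncomputable def gE {n : ℕ} (e : EdgeT n) (x : Fin n → ℝ) : ℝ := cPer (x e.1.1 - x e.1.2)

lemma measurable_gE {n : ℕ} (e : EdgeT n) : Measurable (gE e) :=
  measurable_cPer.comp (by fun_prop)

lemma integrable_of_bdd {n : ℕ} (f : (Fin n → ℝ) → ℝ) (hf : Measurable f) (C : ℝ)
    (h : ∀ x, |f x| ≤ C) : Integrable f (muN n) :=
  Integrable.of_bound hf.aestronglyMeasurable C (ae_of_all _ h)

lemma integrable_gE {n : ℕ} (e : EdgeT n) : Integrable (gE e) (muN n) :=
  integrable_of_bdd _ (measurable_gE e) 1 fun _ => abs_cPer_le _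

lemma integrable_gE_mul {n : ℕ} (e e' : EdgeT n) :
    Integrable (fun x => gE e x * gE e' x) (muN n) :=
  integrable_of_bdd _ ((measurable_gE e).mul (measurable_gE e')) 1 fun x => by
    rw [abs_mul]
    exact mul_le_one₀ (abs_cPer_le _) (abs_nonneg _) (abs_cPer_le _)

lemma inner_gE {n : ℕ} (e : EdgeT n) (a : Fin n) (ha : a = e.1.1 ∨ a = e.1.2) (x : Fin n → ℝ) :
    ∫ u, gE e (Function.update x a u) ∂unif01 = 0 := by
  have hlt := e.2
  rcases ha with h | h
  · subst h
    simp only [gE, Function.update_self, Function.update_of_ne hlt.ne']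
    exact integral_cPer _
  · subst h
    simp only [gE, Function.update_self, Function.update_of_ne hlt.ne]
    exact integral_cPer' _

lemma integral_gE {n : ℕ} (e : EdgeT n) : ∫ x, gE e x ∂(muN n) = 0 := by
  rw [integral_update n e.1.1 _ (integrable_gE e)]
  simp [inner_gE e _ (Or.inl rfl)]

lemma integral_gE_sq {n : ℕ} (e : EdgeT n) : ∫ x, gE e x * gE e x ∂(muN n) = 1 / 180 := by
  rw [integral_update n e.1.1 _ (integrable_gE_mul e e)]
  have hlt := e.2
  simp only [gE, Function.update_self, Function.update_of_ne hlt.ne', ← pow_two, integral_cPer_sq]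
  simp

lemma integral_gE_ortho_aux {n : ℕ} (e e' : EdgeT n) (a : Fin n) (ha : a = e.1.1 ∨ a = e.1.2)
    (h1 : e'.1.1 ≠ a) (h2 : e'.1.2 ≠ a) :
    ∫ x, gE e x * gE e' x ∂(muN n) = 0 := by
  rw [integral_update n a _ (integrable_gE_mul e e')]
  have : ∀ x u, gE e' (Function.update x a u) = gE e' x := by
    intro x u
    simp only [gE, Function.update_of_ne h1, Function.update_of_ne h2]
  simp only [this, integral_mul_const, inner_gE e a ha, zero_mul, integral_zero]

lemma integral_gE_ortho {n : ℕ} (e e' : EdgeT n) (hne : e ≠ e') :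
    ∫ x, gE e x * gE e' x ∂(muN n) = 0 := by
  by_cases h1 : e'.1.1 ≠ e.1.1 ∧ e'.1.2 ≠ e.1.1
  · exact integral_gE_ortho_aux e e' _ (Or.inl rfl) h1.1 h1.2
  by_cases h2 : e'.1.1 ≠ e.1.2 ∧ e'.1.2 ≠ e.1.2
  · exact integral_gE_ortho_aux e e' _ (Or.inr rfl) h2.1 h2.2
  exfalso
  apply hne
  obtain ⟨⟨a, b⟩, hab⟩ := e
  obtain ⟨⟨c, d⟩, hcd⟩ := e'
  simp only [Subtype.mk.injEq, Prod.mk.injEq] at *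
  grind

noncomputable def lin {n : ℕ} (θ : EdgeT n → ℝ) (x : Fin n → ℝ) : ℝ := ∑ e, θ e * gE e x

lemma measurable_lin {n : ℕ} (θ : EdgeT n → ℝ) : Measurable (lin θ) := by
  unfold lin
  exact Finset.measurable_fun_sum _ fun e _ => (measurable_gE e).const_mul _

lemma integral_lin {n : ℕ} (θ : EdgeT n → ℝ) : ∫ x, lin θ x ∂(muN n) = 0 := by
  unfold lin
  rw [integral_finsetSum _ fun e _ => (integrable_gE e).const_mul _]
  simp [integral_const_mul, integral_gE]

lemma integral_lin_sq {n : ℕ} (θ : EdgeT n → ℝ) :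
    ∫ x, lin θ x ^ 2 ∂(muN n) = (∑ e, θ e ^ 2) / 180 := by
  have : ∀ x, lin θ x ^ 2 = ∑ e, ∑ e', (θ e * θ e') * (gE e x * gE e' x) := by
    intro x
    rw [lin, pow_two, Finset.sum_mul_sum]
    refine Finset.sum_congr rfl fun e _ => Finset.sum_congr rfl fun e' _ => by ring
  simp only [this]
  rw [integral_finsetSum _ fun e _ => integrable_finsetSum _ fun e' _ =>
    (integrable_gE_mul e e').const_mul _]
  rw [Finset.sum_div]
  refine Finset.sum_congr rfl fun e _ => ?_
  rw [integral_finsetSum _ fun e' _ => (integrable_gE_mul e e').const_mul _]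
  rw [Finset.sum_eq_single e]
  · rw [integral_const_mul, integral_gE_sq]; ring
  · intro e' _ h
    rw [integral_const_mul, integral_gE_ortho _ _ h.symm, mul_zero]
  · simp

lemma mp_swap (n d : ℕ) :
    MeasurePreserving (fun (ω : Fin n → Fin d → ℝ) (k : Fin d) (i : Fin n) => ω i k)
      (cubeLaw n d) (Measure.pi fun _ : Fin d => muN n) := by
  have hm : Measurable (fun (ω : Fin n → Fin d → ℝ) (k : Fin d) (i : Fin n) => ω i k) := by
    fun_prop
  refine ⟨hm, ?_⟩
  symm
  refine Measure.pi_eq_generateFrom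
    (C := fun _ => Set.univ.pi '' Set.univ.pi fun _ : Fin n => {s : Set ℝ | MeasurableSet s})
    (fun _ => generateFrom_pi) (fun _ => isPiSystem_pi)
    (fun _ => ⟨fun _ => Set.univ, fun _ => ⟨fun _ => Set.univ, by simp, by simp⟩,
      fun _ => measure_lt_top _ _, Set.iUnion_const _⟩) ?_
  intro s hs
  choose T hT hTs using hs
  obtain rfl : s = fun k => Set.univ.pi (T k) := by
    funext k; exact (hTs k).symm
  have hT' : ∀ k i, MeasurableSet (T k i) := fun k i => hT k i (Set.mem_univ _)
  rw [Measure.map_apply hm (MeasurableSet.univ_pi fun k => MeasurableSet.univ_pi (hT' k))]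
  have : (fun (ω : Fin n → Fin d → ℝ) (k : Fin d) (i : Fin n) => ω i k) ⁻¹'
      (Set.univ.pi fun k => Set.univ.pi (T k)) =
      Set.univ.pi fun i => Set.univ.pi fun k => T k i := by
    ext ω
    simp only [Set.mem_preimage, Set.mem_pi, Set.mem_univ, forall_true_left]
    exact forall_comm
  rw [this, cubeLaw, Measure.pi_pi]
  simp only [muN, Measure.pi_pi]
  exact Finset.prod_comm

lemma ae_cube (n d : ℕ) : ∀ᵐ ω ∂(cubeLaw n d), ∀ i k, ω i k ∈ Set.Icc (0:ℝ) 1 := by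
  have h0 : ∀ᵐ x ∂unif01, x ∈ Set.Icc (0:ℝ) 1 := ae_restrict_mem measurableSet_Icc
  rw [ae_all_iff]; intro i
  rw [ae_all_iff]; intro k
  have h1 : ∀ᵐ y ∂(Measure.pi fun _ : Fin d => unif01), y k ∈ Set.Icc (0:ℝ) 1 :=
    (measurePreserving_eval (fun _ : Fin d => unif01) k).quasiMeasurePreserving.ae h0
  exact (measurePreserving_eval (fun _ : Fin n => Measure.pi fun _ : Fin d => unif01)
    i).quasiMeasurePreserving.ae h1

noncomputable def Sd (n d : ℕ) (s : ℝ) (ω : Fin d → Fin n → ℝ) : EuclideanSpace ℝ (EdgeT n) :=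
  WithLp.toLp 2 (fun e => (Real.sqrt d)⁻¹ * (∑ k, gE e (ω k)) + s)

lemma measurable_Sd (n d : ℕ) (s : ℝ) : Measurable (Sd n d s) := by
  unfold Sd
  refine (MeasurableEquiv.toLp 2 (EdgeT n → ℝ)).measurable.comp ?_
  rw [measurable_pi_iff]
  intro e
  refine Measurable.add_const (Measurable.const_mul ?_ _) _
  exact Finset.measurable_fun_sum _ fun k _ => (measurable_gE e).comp (measurable_pi_apply k)

noncomputable def nuD (n d : ℕ) (s : ℝ) : Measure (EuclideanSpace ℝ (EdgeT n)) :=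
  (Measure.pi fun _ : Fin d => muN n).map (Sd n d s)

instance instProbNuD (n d : ℕ) (s : ℝ) : IsProbabilityMeasure (nuD n d s) :=
  Measure.isProbabilityMeasure_map (measurable_Sd n d s).aemeasurable

def evG {n : ℕ} (t : ℝ) (g : SimpleGraph (Fin n)) : Set (EuclideanSpace ℝ (EdgeT n)) :=
  {v | ∀ e : EdgeT n, v e ≤ t ↔ g.Adj e.1.1 e.1.2}

lemma measurableSet_evG {n : ℕ} (t : ℝ) (g : SimpleGraph (Fin n)) : MeasurableSet (evG t g) := by
  unfold evG
  rw [show {v : EuclideanSpace ℝ (EdgeT n) | ∀ e : EdgeT n, v e ≤ t ↔ g.Adj e.1.1 e.1.2}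
    = ⋂ e : EdgeT n, {v | v e ≤ t ↔ g.Adj e.1.1 e.1.2} by ext; simp]
  refine MeasurableSet.iInter fun e => ?_
  have h : MeasurableSet {v : EuclideanSpace ℝ (EdgeT n) | v e ≤ t} :=
    measurableSet_le (by fun_prop) measurable_const
  by_cases hg : g.Adj e.1.1 e.1.2
  · simpa [hg] using h
  · have hc := h.compl
    have he : {v : EuclideanSpace ℝ (EdgeT n) | v e ≤ t ↔ g.Adj e.1.1 e.1.2} =
        {v : EuclideanSpace ℝ (EdgeT n) | v e ≤ t}ᶜ := by
      ext v; simp [hg]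
    rw [he]; exact hc

lemma rggProb_eq (n d : ℕ) (hd : 0 < d) (r t : ℝ) (hr : 0 < r) (g : SimpleGraph (Fin n)) :
    rggProb n d r g =
      (nuD n d (t - (r ^ 2 - d / 12) / Real.sqrt d) (evG t g)).toReal := by
  rw [nuD, Measure.map_apply (measurable_Sd _ _ _) (measurableSet_evG _ _), rggProb]
  have hsw := mp_swap n d
  rw [← hsw.map_eq, Measure.map_apply hsw.measurable
    (measurable_Sd _ _ _ (measurableSet_evG _ _))]
  congr 1
  refine measure_congr ?_
  filter_upwards [ae_cube n d] with ω hω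
  have hsd : 0 < Real.sqrt d := Real.sqrt_pos.2 (by exact_mod_cast hd)
  have key : ∀ e : EdgeT n, torusDist d (ω e.1.1) (ω e.1.2) ≤ r ↔
      Sd n d (t - (r ^ 2 - d / 12) / Real.sqrt d) (fun k i => ω i k) e ≤ t := by
    intro e
    rw [torusDist, Real.sqrt_le_left hr.le]
    simp only [perSq_eq_torus (hω _ _) (hω _ _), Sd, gE, cPer, Finset.sum_sub_distrib]
    simp only [Finset.sum_const, Finset.card_univ, Fintype.card_fin, nsmul_eq_mul]
    rw [inv_mul_eq_div]
    constructor
    · intro h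
      have : (∑ k, perSq (ω e.1.1 k - ω e.1.2 k) - d * (1 / 12)) / Real.sqrt d ≤
        (r ^ 2 - d / 12) / Real.sqrt d := by
        gcongr
        linarith
      linarith
    · intro h
      have : (∑ k, perSq (ω e.1.1 k - ω e.1.2 k) - d * (1 / 12)) / Real.sqrt d ≤
        (r ^ 2 - d / 12) / Real.sqrt d := by linarith
      rw [div_le_div_iff_of_pos_right hsd] at this
      linarith
  apply propext
  change (∀ i j : Fin n, i < j → (torusDist d (ω i) (ω j) ≤ r ↔ g.Adj i j)) ↔
    ∀ e : EdgeT n, (Sd n d (t - (r ^ 2 - d / 12) / Real.sqrt d) (fun k i => ω i k) e ≤ t ↔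
      g.Adj e.1.1 e.1.2)
  simp only [← key]
  constructor
  · intro h e; exact h _ _ e.2
  · intro h i j hij; exact h ⟨(i, j), hij⟩

lemma charFun_nuD (n d : ℕ) (s : ℝ) (θ : EuclideanSpace ℝ (EdgeT n)) :
    charFun (nuD n d s) θ = Complex.exp ((s * ∑ e, θ e : ℝ) * Complex.I) *
      (charFun ((muN n).map (lin θ)) ((Real.sqrt d)⁻¹)) ^ d := by
  rw [charFun_apply, nuD, integral_map (measurable_Sd _ _ _).aemeasurable (by fun_prop),
    charFun_apply_real, integral_map (measurable_lin _).aemeasurable (by fun_prop)]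
  have h1 : ∀ ω : Fin d → Fin n → ℝ, inner ℝ (Sd n d s ω) θ =
      s * (∑ e, θ e) + ∑ k, (Real.sqrt d)⁻¹ * lin θ (ω k) := by
    intro ω
    rw [PiLp.inner_apply]
    simp only [Sd, lin, RCLike.inner_apply, conj_trivial,
      mul_add, Finset.sum_add_distrib, Finset.mul_sum]
    rw [add_comm, Finset.sum_comm]
    congr 1
    · exact Finset.sum_congr rfl fun _ _ => by ring
    · exact Finset.sum_congr rfl fun _ _ => Finset.sum_congr rfl fun _ _ => by ring
  have h2 := integral_fintype_prod_eq_pow (ι := Fin d) (μ := muN n)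
    (fun x => Complex.exp (((Real.sqrt d)⁻¹ : ℝ) * (lin θ x : ℝ) * Complex.I))
  rw [Fintype.card_fin] at h2
  rw [← h2, ← integral_const_mul]
  congr 1
  funext ω
  rw [h1, ← Complex.exp_sum, ← Complex.exp_add]
  congr 1
  push_cast
  rw [add_mul, Finset.sum_mul]

lemma tendsto_charFun_lin {n : ℕ} (θ : EdgeT n → ℝ) :
    Tendsto (fun d : ℕ => (charFun ((muN n).map (lin θ)) ((Real.sqrt d)⁻¹)) ^ d) atTop
      (𝓝 (Complex.exp (-((∑ e, θ e ^ 2) / 180 / 2 : ℝ)))) := by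
  set v : ℝ := (∑ e, θ e ^ 2) / 180 with hv
  have hv0 : 0 ≤ v := by positivity
  rcases hv0.eq_or_lt with h | h
  · have hθ : ∀ e, θ e = 0 := by
      have : ∑ e, θ e ^ 2 = 0 := by linarith
      rw [Finset.sum_eq_zero_iff_of_nonneg fun _ _ => sq_nonneg _] at this
      intro e
      exact pow_eq_zero_iff two_ne_zero |>.1 (this e (Finset.mem_univ _))
    have hl : lin θ = fun _ => 0 := by funext x; simp [lin, hθ]
    rw [← h, hl]
    simp
  · set σ := Real.sqrt v with hσ
    have hσ0 : 0 < σ := Real.sqrt_pos.2 h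
    have hσ2 : σ ^ 2 = v := Real.sq_sqrt hv0
    have e0 : ∫ x, (fun x => σ⁻¹ * lin θ x) x ∂(muN n) = 0 := by
      simp only [integral_const_mul, integral_lin, mul_zero]
    have e1 : ∫ x, ((fun x => σ⁻¹ * lin θ x) ^ 2) x ∂(muN n) = 1 := by
      simp only [Pi.pow_apply, mul_pow, integral_const_mul, integral_lin_sq]
      rw [← hv, ← hσ2]
      field_simp
    have hm : Measurable (fun x => σ⁻¹ * lin θ x) := (measurable_lin θ).const_mul _
    have := tendsto_charFun_inv_sqrt_mul_pow (P := muN n) hm.aemeasurable e0 e1 σ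
    convert this using 2 with d
    · congr 1
      rw [charFun_apply_real, charFun_apply_real, integral_map hm.aemeasurable (by fun_prop),
        integral_map (measurable_lin _).aemeasurable (by fun_prop)]
      congr 1
      funext x
      congr 2
      have : (σ : ℂ) ≠ 0 := by exact_mod_cast hσ0.ne'
      push_cast
      field_simp
    · congr 1
      rw [← hσ2]
      push_cast
      ring

noncomputable abbrev gLaw : Measure ℝ := gaussianReal 0 (1/180 : NNReal)

noncomputable def gam (n : ℕ) : Measure (EuclideanSpace ℝ (EdgeT n)) :=
  (Measure.pi fun _ : EdgeT n => gLaw).map (WithLp.toLp 2)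

lemma meas_toLp (n : ℕ) : Measurable (WithLp.toLp 2 : (EdgeT n → ℝ) → EuclideanSpace ℝ (EdgeT n)) :=
  (MeasurableEquiv.toLp 2 (EdgeT n → ℝ)).measurable

instance instProbGam (n : ℕ) : IsProbabilityMeasure (gam n) :=
  Measure.isProbabilityMeasure_map (meas_toLp n).aemeasurable

lemma charFun_gam (n : ℕ) (θ : EuclideanSpace ℝ (EdgeT n)) :
    charFun (gam n) θ = Complex.exp (-((∑ e, θ e ^ 2) / 180 / 2 : ℝ)) := by
  rw [gam, charFun_pi]
  simp only [charFun_gaussianReal]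
  rw [← Complex.exp_sum]
  congr 1
  push_cast
  rw [Finset.sum_div, Finset.sum_div, ← Finset.sum_neg_distrib]
  refine Finset.sum_congr rfl fun e _ => ?_
  ring

noncomputable def nuP (n d : ℕ) (s : ℝ) : ProbabilityMeasure (EuclideanSpace ℝ (EdgeT n)) :=
  ⟨nuD n d s, inferInstance⟩

noncomputable def gamP (n : ℕ) : ProbabilityMeasure (EuclideanSpace ℝ (EdgeT n)) :=
  ⟨gam n, inferInstance⟩

lemma coe_nuP (n d : ℕ) (s : ℝ) : (nuP n d s : Measure (EuclideanSpace ℝ (EdgeT n))) = nuD n d s :=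
  rfl

lemma coe_gamP (n : ℕ) : (gamP n : Measure (EuclideanSpace ℝ (EdgeT n))) = gam n := rfl

lemma tendsto_nuD (n : ℕ) (s : ℕ → ℝ) (hs : Tendsto s atTop (𝓝 0)) :
    Tendsto (fun d => nuP n d (s d)) atTop (𝓝 (gamP n)) := by
  refine ProbabilityMeasure.tendsto_of_tendsto_charFun fun θ => ?_
  simp only [coe_nuP, coe_gamP, charFun_nuD, charFun_gam]
  have h1 : Tendsto (fun d => Complex.exp ((s d * ∑ e, θ e : ℝ) * Complex.I)) atTop (𝓝 1) := by
    have : Continuous fun x : ℝ => Complex.exp ((x * ∑ e, θ e : ℝ) * Complex.I) := by fun_prop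
    have := (this.tendsto 0).comp hs
    simpa [Function.comp_def] using this
  simpa using h1.mul (tendsto_charFun_lin (fun e => θ e))

lemma frontier_evG {n : ℕ} (t : ℝ) (g : SimpleGraph (Fin n)) :
    frontier (evG t g) ⊆ ⋃ e : EdgeT n, {v | v e = t} := by
  intro v hv
  by_contra hcon
  simp only [Set.mem_iUnion, Set.mem_ofPred_eq, not_exists] at hcon
  have hev : ∀ᶠ w in 𝓝 v, ∀ e : EdgeT n, (w e ≤ t ↔ v e ≤ t) := by
    rw [eventually_all]
    intro e
    have hc : Continuous fun w : EuclideanSpace ℝ (EdgeT n) => w e := by fun_prop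
    rcases lt_or_gt_of_ne (hcon e) with h | h
    · filter_upwards [hc.continuousAt.eventually_lt continuousAt_const h] with w hw
      exact ⟨fun _ => h.le, fun _ => hw.le⟩
    · filter_upwards [continuousAt_const.eventually_lt hc.continuousAt h] with w hw
      exact ⟨fun h' => absurd h' (not_le.2 hw), fun h' => absurd h' (not_le.2 h)⟩
  by_cases hm : v ∈ evG t g
  · apply hv.2
    rw [mem_interior_iff_mem_nhds]
    filter_upwards [hev] with w hw e
    rw [hw e]; exact hm e
  · have : v ∉ closure (evG t g) := by
      rw [mem_closure_iff_frequently, not_frequently]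
      filter_upwards [hev] with w hw hw'
      apply hm
      intro e
      rw [← hw e]; exact hw' e
    exact this hv.1

lemma v_ne : (1/180 : NNReal) ≠ 0 := by norm_num

lemma gam_frontier {n : ℕ} (t : ℝ) (g : SimpleGraph (Fin n)) :
    gam n (frontier (evG t g)) = 0 := by
  refine measure_mono_null (frontier_evG t g) ?_
  rw [measure_iUnion_null_iff]
  intro e
  have hms : MeasurableSet {v : EuclideanSpace ℝ (EdgeT n) | v e = t} :=
    measurableSet_eq_fun (by fun_prop) measurable_const
  rw [gam, Measure.map_apply (meas_toLp n) hms]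
  have h := measurePreserving_eval (fun _ : EdgeT n => gLaw) e
  have h2 := h.measure_preimage (s := {t}) (measurableSet_singleton t).nullMeasurableSet
  haveI := nullSingletonClass_gaussianReal (μ := 0) v_ne
  have h3 : gLaw {t} = 0 := measure_singleton t
  rw [h3] at h2
  exact h2

open Classical in
lemma gam_evG {n : ℕ} (t : ℝ) (g : SimpleGraph (Fin n)) :
    (gam n (evG t g)).toReal =
      ∏ e : EdgeT n, if g.Adj e.1.1 e.1.2 then pbar t else 1 - pbar t := by
  rw [gam, Measure.map_apply (meas_toLp n) (measurableSet_evG t g)]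
  have : (WithLp.toLp 2 : (EdgeT n → ℝ) → EuclideanSpace ℝ (EdgeT n)) ⁻¹' (evG t g) =
      Set.univ.pi fun e : EdgeT n => if g.Adj e.1.1 e.1.2 then Set.Iic t else (Set.Iic t)ᶜ := by
    ext v
    simp only [evG, Set.mem_preimage, Set.mem_ofPred_eq, Set.mem_pi, Set.mem_univ, forall_true_left]
    refine forall_congr' fun e => ?_
    split_ifs with h <;> simp [h]
  rw [this, Measure.pi_pi, ENNReal.toReal_prod]
  refine Finset.prod_congr rfl fun e _ => ?_
  split_ifs with h
  · rfl
  · exact probReal_compl_eq_one_sub measurableSet_Iic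

open Classical in
lemma tendsto_rggProb (n : ℕ) (t : ℝ) (r₀ : ℕ → ℝ) (hpos : ∀ d, 0 < r₀ d)
    (ht : Tendsto (fun d : ℕ => (r₀ d ^ 2 - d / 12) / Real.sqrt d) atTop (𝓝 t))
    (g : SimpleGraph (Fin n)) :
    Tendsto (fun d => rggProb n d (r₀ d) g) atTop
      (𝓝 (∏ e : EdgeT n, if g.Adj e.1.1 e.1.2 then pbar t else 1 - pbar t)) := by
  have hs : Tendsto (fun d : ℕ => t - (r₀ d ^ 2 - d / 12) / Real.sqrt d) atTop (𝓝 0) := by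
    simpa using ht.const_sub t
  have h := ProbabilityMeasure.tendsto_measure_of_null_frontier_of_tendsto' (tendsto_nuD n _ hs)
    (E := evG t g) (gam_frontier t g)
  simp only [coe_nuP, coe_gamP] at h
  have h2 := (ENNReal.tendsto_toReal (measure_ne_top _ _)).comp h
  rw [← gam_evG]
  refine h2.congr' ?_
  filter_upwards [eventually_gt_atTop 0] with d hd
  rw [rggProb_eq n d hd _ t (hpos d)]
  rfl

open Classical in
noncomputable def graphEquiv (n : ℕ) : SimpleGraph (Fin n) ≃ (EdgeT n → Bool) where
  toFun g e := decide (g.Adj e.1.1 e.1.2)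
  invFun f :=
    { Adj := fun a b => (∃ h : a < b, f ⟨(a, b), h⟩ = true) ∨ ∃ h : b < a, f ⟨(b, a), h⟩ = true
      symm := ⟨fun a b h => h.symm⟩
      loopless := ⟨fun a h => by simp at h⟩ }
  left_inv g := by
    ext a b
    simp only [decide_eq_true_eq, exists_prop]
    constructor
    · rintro (h | h)
      · exact h.2
      · exact h.2.symm
    · intro h
      rcases lt_or_gt_of_ne h.ne with h' | h'
      · exact Or.inl ⟨h', h⟩
      · exact Or.inr ⟨h', h.symm⟩
  right_inv f := by
    funext e
    have h := e.2
    simp [h, h.not_gt]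

lemma card_edge (n : ℕ) : (Fintype.card (EdgeT n) : ℝ) = (n * (n - 1) : ℝ) / 2 := by
  have h : Fintype.card (EdgeT n) = ∑ j ∈ Finset.range n, j := by
    rw [Fintype.card_subtype, Finset.card_filter, Fintype.sum_prod_type_right,
      ← Fin.sum_univ_eq_sum_range (fun j => j)]
    refine Finset.sum_congr rfl fun j _ => ?_
    rw [← Finset.card_filter, ← Fin.card_Iio j]
    congr 1
    ext x; simp
  have h2 := Finset.sum_range_id_mul_two n
  rw [← h] at h2
  rcases n with _ | m
  · simp
  · have h3 : ((Fintype.card (EdgeT (m+1)) * 2 : ℕ) : ℝ) = (((m + 1) * (m + 1 - 1) : ℕ) : ℝ) := by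
      rw [h2]
    rw [Nat.add_sub_cancel] at h3
    push_cast at h3 ⊢
    linarith

lemma sum_prod_log {ι : Type*} [Fintype ι] [DecidableEq ι] (w : Bool → ℝ) (hw : ∀ b, 0 < w b)
    (h1 : w true + w false = 1) :
    ∑ f : ι → Bool, (∏ e, w (f e)) * Real.logb 2 (∏ e, w (f e)) =
      Fintype.card ι * (w true * Real.logb 2 (w true) + w false * Real.logb 2 (w false)) := by
  have h : ∀ f : ι → Bool, (∏ e, w (f e)) * Real.logb 2 (∏ e, w (f e)) =
      ∑ a, ∏ e, (w (f e) * if e = a then Real.logb 2 (w (f e)) else 1) := by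
    intro f
    rw [Real.logb_prod _ _ fun e _ => (hw _).ne', Finset.mul_sum]
    refine Finset.sum_congr rfl fun a _ => ?_
    rw [Finset.prod_mul_distrib, Finset.prod_ite_eq' Finset.univ a]
    simp
  simp only [h]
  rw [Finset.sum_comm]
  have h2 : ∀ a : ι, ∑ f : ι → Bool, ∏ e, (w (f e) * if e = a then Real.logb 2 (w (f e)) else 1) =
      w true * Real.logb 2 (w true) + w false * Real.logb 2 (w false) := by
    intro a
    have := Finset.prod_univ_sum (fun _ : ι => (Finset.univ : Finset Bool))
      (fun e b => w b * if e = a then Real.logb 2 (w b) else 1)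
    rw [Fintype.piFinset_univ] at this
    rw [← this, Finset.prod_eq_single a]
    · simp
    · intro b _ hb
      simp [hb, h1]
    · simp
  rw [Finset.sum_congr rfl fun a _ => h2 a]
  simp [mul_add]

lemma pbar_strictMono : StrictMono pbar := by
  intro s t hst
  have h : pbar t = pbar s + (gLaw (Set.Ioc s t)).toReal := by
    unfold pbar
    rw [← Set.Iic_union_Ioc_eq_Iic hst.le, measure_union (Set.Iic_disjoint_Ioc le_rfl)
      measurableSet_Ioc, ENNReal.toReal_add (measure_ne_top _ _) (measure_ne_top _ _)]
  have h2 : 0 < (gLaw (Set.Ioc s t)).toReal := by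
    refine ENNReal.toReal_pos (fun h0 => ?_) (measure_ne_top _ _)
    have := gaussianReal_absolutelyContinuous' 0 v_ne h0
    rw [Real.volume_Ioc, ENNReal.ofReal_eq_zero] at this
    linarith
  linarith

lemma pbar_pos (t : ℝ) : 0 < pbar t :=
  lt_of_le_of_lt ENNReal.toReal_nonneg (pbar_strictMono (sub_one_lt t))

lemma pbar_lt_one (t : ℝ) : pbar t < 1 :=
  lt_of_lt_of_le (pbar_strictMono (lt_add_one t)) measureReal_le_one

lemma pbar_zero : pbar 0 = 1 / 2 := by
  have hm : gLaw.map (fun x => -x) = gLaw := by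
    rw [gaussianReal_map_neg, neg_zero]
  haveI := nullSingletonClass_gaussianReal (μ := 0) v_ne
  have h1 : gLaw (Set.Iic 0) = gLaw (Set.Ici 0) := by
    conv_lhs => rw [← hm, Measure.map_apply measurable_neg measurableSet_Iic]
    congr 1
    ext x; simp
  have h2 : gLaw (Set.Ici 0) = gLaw (Set.Ioi 0) := measure_congr Ioi_ae_eq_Ici.symm
  have h3 : (gLaw (Set.Iic 0)ᶜ).toReal = 1 - (gLaw (Set.Iic 0)).toReal :=
    probReal_compl_eq_one_sub measurableSet_Iic
  rw [Set.compl_Iic, ← h2, ← h1] at h3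
  unfold pbar
  linarith

lemma binEnt_eq (p : ℝ) : binEnt p = Real.binEntropy p / Real.log 2 := by
  rw [Real.binEntropy_eq_negMulLog_add_negMulLog_one_sub, binEnt, Real.logb, Real.logb,
    Real.negMulLog, Real.negMulLog]
  ring

/-- The entropy of the hard RGG on `n` i.i.d. uniform points in the `d`-torus with radius
`r₀(d)`, `(r₀(d)² − d/12)/√d → t`, tends to `(n(n−1)/2)·h₂(p̄(t))`; this limit, as a
function of `t`, is maximised exactly at `t = 0`, where `p̄(0) = 1/2` and the limit is
`n(n−1)/2`. -/
theorem stmt_14 (n : ℕ) (hn : 2 ≤ n) (t : ℝ) (r₀ : ℕ → ℝ)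
    (hpos : ∀ d, 0 < r₀ d)
    (ht : Tendsto (fun d : ℕ => (r₀ d ^ 2 - d / 12) / Real.sqrt d) atTop (𝓝 t)) :
    Tendsto (fun d : ℕ => rggEntropy n d (r₀ d)) atTop
      (𝓝 ((n * (n - 1) : ℝ) / 2 * binEnt (pbar t))) ∧
    (∀ s : ℝ, s ≠ 0 →
      (n * (n - 1) : ℝ) / 2 * binEnt (pbar s) < (n * (n - 1) : ℝ) / 2 * binEnt (pbar 0)) ∧
    pbar 0 = 1/2 ∧
    (n * (n - 1) : ℝ) / 2 * binEnt (pbar 0) = (n * (n - 1) : ℝ) / 2 := by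
  classical
  have hl2 : 0 < Real.log 2 := Real.log_pos one_lt_two
  have hb0 : binEnt (pbar 0) = 1 := by
    rw [pbar_zero, binEnt_eq, one_div, Real.binEntropy_two_inv, div_self hl2.ne']
  refine ⟨?_, ?_, pbar_zero, by rw [hb0, mul_one]⟩
  · set w : Bool → ℝ := fun b => if b then pbar t else 1 - pbar t with hw
    have hw0 : ∀ b, 0 < w b := by
      intro b
      have h1 := pbar_pos t
      have h2 := pbar_lt_one t
      cases b <;> simp [hw] <;> linarith
    have hlim : Tendsto (fun d : ℕ => rggEntropy n d (r₀ d)) atTop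
        (𝓝 (-∑ g : SimpleGraph (Fin n),
          (∏ e : EdgeT n, w (graphEquiv n g e)) *
            Real.logb 2 (∏ e : EdgeT n, w (graphEquiv n g e)))) := by
      refine (tendsto_finsetSum _ fun g _ => ?_).neg
      have h := tendsto_rggProb n t r₀ hpos ht g
      have h' : (∏ e : EdgeT n, w (graphEquiv n g e)) =
          ∏ e : EdgeT n, if g.Adj e.1.1 e.1.2 then pbar t else 1 - pbar t := by
        refine Finset.prod_congr rfl fun e _ => ?_
        simp [hw, graphEquiv]
      rw [← h'] at h
      have hne : (∏ e : EdgeT n, w (graphEquiv n g e)) ≠ 0 :=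
        (Finset.prod_pos fun e _ => hw0 _).ne'
      exact h.mul (by
        simp only [Real.logb]
        exact (h.log hne).div_const _)
    convert hlim using 2
    rw [Equiv.sum_comp (graphEquiv n)
      (fun f => (∏ e : EdgeT n, w (f e)) * Real.logb 2 (∏ e : EdgeT n, w (f e))),
      sum_prod_log w hw0 (by simp [hw]), card_edge]
    simp only [hw, binEnt, if_true, Bool.false_eq_true, if_false]
    ring
  · intro s hs
    have hn' : (2:ℝ) ≤ n := by exact_mod_cast hn
    have hc : (0:ℝ) < (n * (n - 1) : ℝ) / 2 := by
      have : (0:ℝ) < n * (n - 1) := mul_pos (by linarith) (by linarith)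
      linarith
    refine mul_lt_mul_of_pos_left ?_ hc
    rw [hb0, binEnt_eq, div_lt_one hl2, Real.binEntropy_lt_log_two, ← one_div, ← pbar_zero]
    exact fun h => hs (pbar_strictMono.injective h)
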